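/- Let U be a consistent c.e. theory and let 𝒳, 𝒴 be sets of sentences with U ⦚ 𝒳 (every φ ∈ 𝒳 proves every axiom of U). If U is 𝒳-creative and effectively 𝒴-inseparable, then U is strongly effectively (𝒳 ∧ 𝒴)-inseparable: there is a partial computable Φ such that whenever W_i and W_j weakly biseparate U_p and 0_{U,r}, Φ(i, j) converges, Φ(i, j) ∈ 𝒳 ∧ 𝒴, and Φ(i, j) ∉ W_i ∪ W_j. -/

import Mathlib

open FirstOrder FirstOrder.Language

namespace PourEl

/-! ## Recursion-theoretic notions -/

/-- The `i`-th computably enumerable subset of `ℕ` (the domain of the `i`-th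
partial computable function). -/
def WSet (i : ℕ) : Set ℕ :=
  {n | ((Denumerable.ofNat Nat.Partrec.Code i).eval n).Dom}

/-- A set of natural numbers is computably enumerable. -/
def CE (A : Set ℕ) : Prop := ∃ i, A = WSet i

/-- A set of natural numbers is computable. -/
def Comp (A : Set ℕ) : Prop := ComputablePred (· ∈ A)

/-- Disjoint sets `X`, `Y` are computably separable iff some computable set
contains `X` and is disjoint from `Y`. -/
def CompSeparable (X Y : Set ℕ) : Prop :=
  ∃ Z : Set ℕ, Comp Z ∧ X ⊆ Z ∧ Y ∩ Z = ∅

/-- Computable inseparability. -/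
def CompInseparable (X Y : Set ℕ) : Prop := ¬ CompSeparable X Y

/-- `Z` and `W` weakly biseparate `X` and `Y`. -/
def WeaklyBiseparate {α : Type*} (Z W X Y : Set α) : Prop :=
  X ⊆ Z ∧ Y ⊆ W ∧ Z ∩ Y = ∅ ∧ W ∩ X = ∅

/-- `Z` and `W` biseparate `X` and `Y`. -/
def Biseparate {α : Type*} (Z W X Y : Set α) : Prop :=
  WeaklyBiseparate Z W X Y ∧ Z ∩ W = ∅

/-! ## Logical notions -/

variable {L : FirstOrder.Language}

/-- Provability: `φ` is a first-order consequence of `U` (by Gödel completeness,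
semantic consequence). -/
def Prv (U : L.Theory) (φ : L.Sentence) : Prop := U ⊨ᵇ φ

/-- `U_p`: the set of theorems of `U`. -/
def Thms (U : L.Theory) : Set L.Sentence := {φ | Prv U φ}

/-- `U_r`: the set of refutable sentences of `U`. -/
def Refut (U : L.Theory) : Set L.Sentence := {φ | Prv U ∼φ}

/-- Consistency: `U ⊬ ⊥`. -/
def Consistent (U : L.Theory) : Prop := ¬ Prv U ⊥

/-- `φ` is independent of `U`: `U` proves neither `φ` nor `¬φ`. -/
def Independent (U : L.Theory) (φ : L.Sentence) : Prop := ¬ Prv U φ ∧ ¬ Prv U ∼φ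

/-- `U` is incomplete: some sentence is independent of it. -/
def Incomplete (U : L.Theory) : Prop := ∃ φ, Independent U φ

/-- Mono-consequence: `U ⊢_m φ` iff `ψ ⊢ φ` for some `ψ ∈ U`. -/
def MPrv (U : L.Theory) (φ : L.Sentence) : Prop := ∃ ψ ∈ U, Prv {ψ} φ

/-- `U_m`: the set of mono-theorems of `U`. -/
def MThms (U : L.Theory) : Set L.Sentence := {φ | MPrv U φ}

/-- `U_n`: the set of mono-refutable sentences of `U`. -/
def MRefut (U : L.Theory) : Set L.Sentence := {φ | MPrv U ∼φ}

/-- Mono-consistency: every member is consistent by itself. -/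
def MonoConsistent (U : L.Theory) : Prop := ∀ ψ ∈ U, Consistent ({ψ} : L.Theory)

/-- `Û`: the set of all non-empty finite conjunctions of elements of `U`. -/
def hat (U : L.Theory) : L.Theory :=
  {φ | ∃ (ψ : L.Sentence) (l : List L.Sentence),
    ψ ∈ U ∧ (∀ χ ∈ l, χ ∈ U) ∧ φ = l.foldl (· ⊓ ·) ψ}

/-- `U ⋓ V`. -/
def Cup (U V : L.Theory) : L.Theory :=
  {χ | ∃ φ ∈ U, ∃ ψ ∈ V, χ = φ ⊓ ψ}

/-- `U ⋐ V`: for every `φ ∈ U` and `ψ ∈ V` there is `ρ ∈ V` with `ρ ⊢ φ ∧ ψ`. -/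
def Ssub (U V : L.Theory) : Prop :=
  ∀ φ ∈ U, ∀ ψ ∈ V, ∃ ρ ∈ V, Prv {ρ} (φ ⊓ ψ)

/-! ## Gödel numbering -/

/-- A Gödel numbering of the sentences of a (countable) signature: a bijective
coding of sentences by natural numbers that is effective for the basic syntactic
operations, and for which the theorems of a c.e. theory can be effectively
enumerated from an index of the theory. -/
structure Numbering (L : FirstOrder.Language) where
  equiv : L.Sentence ≃ ℕ
  neg_comp : Computable fun n => equiv ∼(equiv.symm n)
  inf_comp : Computable₂ fun m n => equiv (equiv.symm m ⊓ equiv.symm n)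
  imp_comp : Computable₂ fun m n => equiv (equiv.symm m ⟹ equiv.symm n)
  iff_comp : Computable₂ fun m n => equiv (equiv.symm m ⇔ equiv.symm n)
  thmIdx : ℕ → ℕ
  thmIdx_comp : Computable thmIdx
  thmIdx_spec : ∀ i, WSet (thmIdx i) = equiv '' Thms (equiv.symm '' WSet i)

namespace Numbering

variable (g : Numbering L)

/-- The code of a sentence. -/
def code (φ : L.Sentence) : ℕ := g.equiv φ

/-- The set of codes of a set of sentences. -/
def codes (S : Set L.Sentence) : Set ℕ := g.equiv '' S

/-- The theory axiomatised by the `i`-th c.e. set (identified with a set of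
sentences via the numbering). -/
def thy (i : ℕ) : L.Theory := g.equiv.symm '' WSet i

/-- The theory `U` is computably enumerable (with respect to the numbering). -/
def CEThy (U : L.Theory) : Prop := CE (g.codes U)

end Numbering



/-- `U` is effectively `X`-inseparable: a partial computable function uniformly
produces, from any pair of c.e. sets weakly biseparating `U_p` and `U_r`, a
sentence in `X` lying outside both. -/
def EffXInseparable (g : Numbering L) (U : L.Theory) (X : Set L.Sentence) : Prop :=
  ∃ Φ : ℕ → ℕ →. ℕ, Partrec₂ Φ ∧ ∀ i j,
    WeaklyBiseparate (WSet i) (WSet j) (g.codes (Thms U)) (g.codes (Refut U)) →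
    ∃ n ∈ Φ i j, n ∈ g.codes X ∧ n ∉ WSet i ∪ WSet j

/-- `U` is `X`-creative. -/
def XCreative (g : Numbering L) (U : L.Theory) (X : Set L.Sentence) : Prop :=
  ∃ Φ : ℕ →. ℕ, Partrec Φ ∧ ∀ i, g.codes (Thms U) ∩ WSet i = ∅ →
    ∃ n ∈ Φ i, n ∈ g.codes X ∧ n ∉ g.codes (Thms U) ∪ WSet i

/-- The s-m-n theorem for `WSet`. -/
theorem smn_aux (f : ℕ × ℕ →. ℕ) (hf : Partrec f) :
    ∃ k : ℕ → ℕ, Computable k ∧ ∀ j, WSet (k j) = {n | (f (j, n)).Dom} := by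
  have h1 : Nat.Partrec fun n => f (Nat.unpair n) :=
    Partrec.nat_iff.1 (hf.comp Primrec.unpair.to_comp)
  obtain ⟨c, hc⟩ := Nat.Partrec.Code.exists_code.1 h1
  refine ⟨fun j => Encodable.encode (Nat.Partrec.Code.curry c j), ?_, ?_⟩
  · exact (Primrec.encode.comp
      (Nat.Partrec.Code.primrec₂_curry.comp (Primrec.const c) Primrec.id)).to_comp
  · intro j
    ext n
    simp [WSet, Nat.Partrec.Code.eval_curry, hc]

/-- The universal partial computable function for `WSet`. -/
theorem wset_partrec : Partrec fun p : ℕ × ℕ =>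
    (Denumerable.ofNat Nat.Partrec.Code p.1).eval p.2 :=
  Nat.Partrec.Code.eval_part.comp
    ((Computable.ofNat Nat.Partrec.Code).comp Computable.fst) Computable.snd

/-- `WSet` membership through a bounded evaluation. -/
def wstep (i n s : ℕ) : Bool :=
  (Nat.Partrec.Code.evaln s (Denumerable.ofNat Nat.Partrec.Code i) n).isSome

theorem wstep_mono {i n s t : ℕ} (h : s ≤ t) (hs : wstep i n s = true) :
    wstep i n t = true := by
  simp only [wstep, Option.isSome_iff_exists] at *
  obtain ⟨a, ha⟩ := hs
  exact ⟨a, Nat.Partrec.Code.evaln_mono h ha⟩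

theorem mem_wset_iff {i n : ℕ} : n ∈ WSet i ↔ ∃ s, wstep i n s = true := by
  simp only [WSet, wstep, Set.mem_ofPred_eq, Part.dom_iff_mem, Option.isSome_iff_exists,
    Nat.Partrec.Code.evaln_complete]
  constructor
  · rintro ⟨y, k, h⟩
    exact ⟨k, y, h⟩
  · rintro ⟨k, y, h⟩
    exact ⟨y, k, h⟩

theorem wstep_comp : Computable fun p : (ℕ × ℕ) × ℕ => wstep p.1.1 p.1.2 p.2 := by
  have h1 : Primrec fun p : (ℕ × ℕ) × ℕ =>
      Nat.Partrec.Code.evaln p.2 (Denumerable.ofNat Nat.Partrec.Code p.1.1) p.1.2 :=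
    Nat.Partrec.Code.primrec_evaln.comp
      (Primrec.pair (Primrec.pair Primrec.snd
        ((Primrec.ofNat Nat.Partrec.Code).comp (Primrec.fst.comp Primrec.fst)))
        (Primrec.snd.comp Primrec.fst))
  exact (Primrec.option_isSome.comp h1).to_comp

attribute [irreducible] wstep

/-- Uniform c.e. projection. -/
theorem proj_idx (t : ℕ) (F : ℕ → ℕ → ℕ) (hF : Computable₂ F) :
    ∃ k : ℕ → ℕ, Computable k ∧
      ∀ j, WSet (k j) = {n | ∃ m ∈ WSet t, F n m ∈ WSet j} := by
  let q : ℕ × ℕ → ℕ → Bool := fun a p =>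
    (wstep t p.unpair.1 p.unpair.2) && (wstep a.1 (F a.2 p.unpair.1) p.unpair.2)
  have hm : Computable fun x : (ℕ × ℕ) × ℕ => x.2.unpair.1 :=
    Computable.fst.comp (Primrec.unpair.to_comp.comp Computable.snd)
  have hs : Computable fun x : (ℕ × ℕ) × ℕ => x.2.unpair.2 :=
    Computable.snd.comp (Primrec.unpair.to_comp.comp Computable.snd)
  have hq : Computable₂ q := by
    have a1 : Computable fun x : (ℕ × ℕ) × ℕ => wstep t x.2.unpair.1 x.2.unpair.2 :=
      Computable.comp (f := fun p : (ℕ × ℕ) × ℕ => wstep p.1.1 p.1.2 p.2) (g := fun x : (ℕ × ℕ) × ℕ => ((t, x.2.unpair.1), x.2.unpair.2))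
        wstep_comp (((Computable.const t).pair hm).pair hs)
    have b1 : Computable fun x : (ℕ × ℕ) × ℕ => x.1.1 := Computable.fst.comp Computable.fst
    have b2 : Computable fun x : (ℕ × ℕ) × ℕ => x.1.2 := Computable.snd.comp Computable.fst
    have b3 : Computable fun x : (ℕ × ℕ) × ℕ => F x.1.2 x.2.unpair.1 :=
      Computable₂.comp (f := F) hF b2 hm
    have a2 : Computable fun x : (ℕ × ℕ) × ℕ =>
        wstep x.1.1 (F x.1.2 x.2.unpair.1) x.2.unpair.2 :=
      Computable.comp (f := fun p : (ℕ × ℕ) × ℕ => wstep p.1.1 p.1.2 p.2)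
        (g := fun x : (ℕ × ℕ) × ℕ => ((x.1.1, F x.1.2 x.2.unpair.1), x.2.unpair.2))
        wstep_comp ((b1.pair b3).pair hs)
    exact Computable₂.comp (f := and) Primrec.and.to_comp a1 a2
  have hr : Partrec fun a : ℕ × ℕ => Nat.rfind (fun p => (Part.some (q a p))) :=
    Partrec.rfind hq.partrec₂
  obtain ⟨k, hk, hk2⟩ := smn_aux _ hr
  refine ⟨k, hk, fun j => ?_⟩
  rw [hk2]
  ext n
  simp only [Set.mem_ofPred_eq]
  constructor
  · rintro ⟨p, hp, -⟩
    have hp' : q (j, n) p = true := (Part.mem_some_iff.1 hp).symm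
    simp only [q, Bool.and_eq_true] at hp'
    exact ⟨p.unpair.1, mem_wset_iff.2 ⟨_, hp'.1⟩, mem_wset_iff.2 ⟨_, hp'.2⟩⟩
  · rintro ⟨m, h1, h2⟩
    obtain ⟨s, hs⟩ := mem_wset_iff.1 h1
    obtain ⟨s', hs'⟩ := mem_wset_iff.1 h2
    refine ⟨Nat.pair m (max s s'), ?_, fun _ => (fun _ => trivial)⟩
    refine Part.mem_some_iff.2 (Eq.symm ?_)
    simp only [q, Bool.and_eq_true, Nat.unpair_pair]
    exact ⟨wstep_mono (le_max_left _ _) hs, wstep_mono (le_max_right _ _) hs'⟩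

/-- Uniform preimage: index of `{m | F n m ∈ W_j}` from `(n, j)`. -/
theorem preim_idx (F : ℕ → ℕ → ℕ) (hF : Computable₂ F) :
    ∃ k : ℕ → ℕ → ℕ, Computable₂ k ∧ ∀ n j, WSet (k n j) = {m | F n m ∈ WSet j} := by
  have h : Partrec fun a : ℕ × ℕ => (Denumerable.ofNat Nat.Partrec.Code a.1.unpair.2).eval
      (F a.1.unpair.1 a.2) := by
    have hu : Computable fun a : ℕ × ℕ => a.1.unpair :=
      Primrec.unpair.to_comp.comp Computable.fst
    exact wset_partrec.comp ((Computable.snd.comp hu).pair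
      (hF.comp (Computable.fst.comp hu) Computable.snd))
  obtain ⟨k, hk, hk2⟩ := smn_aux _ h
  refine ⟨fun n j => k (Nat.pair n j), hk.comp Primrec₂.natPair.to_comp, fun n j => ?_⟩
  rw [hk2]
  ext m
  simp [WSet]

/-- Uniform union with a fixed c.e. set. -/
theorem union_idx (t : ℕ) :
    ∃ k : ℕ → ℕ, Computable k ∧ ∀ i, WSet (k i) = WSet t ∪ WSet i := by
  have h1 : Partrec fun a : ℕ × ℕ => (Denumerable.ofNat Nat.Partrec.Code t).eval a.2 :=
    wset_partrec.comp ((Computable.const t).pair Computable.snd)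
  obtain ⟨f, hf, hf2⟩ := Partrec.merge' h1 wset_partrec
  obtain ⟨k, hk, hk2⟩ := smn_aux _ hf
  refine ⟨k, hk, fun i => ?_⟩
  rw [hk2]
  ext n
  exact (hf2 (i, n)).2

section Logic

universe u v

variable {L : FirstOrder.Language.{u, v}}

theorem prv_iff {U : L.Theory} {φ : L.Sentence} :
    Prv U φ ↔ ∀ M : Theory.ModelType.{u, v, max u v} U, M ⊨ φ :=
  Theory.models_sentence_iff

theorem prv_cut {U V : L.Theory} (h : ∀ ψ ∈ U, Prv V ψ) {φ : L.Sentence}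
    (hφ : Prv U φ) : Prv V φ := by
  rw [prv_iff] at *
  intro M
  have : M ⊨ U := ⟨fun ψ hψ => prv_iff.1 (h ψ hψ) M⟩
  exact hφ (Theory.ModelType.of U M)

theorem prv_inf {U : L.Theory} {φ ψ : L.Sentence} (h1 : Prv U φ) (h2 : Prv U ψ) :
    Prv U (φ ⊓ ψ) := by
  rw [prv_iff] at *
  intro M
  exact (Sentence.realize_inf _).2 ⟨h1 M, h2 M⟩

theorem prv_not_both {U : L.Theory} (hcon : Consistent U) {φ : L.Sentence}
    (h1 : Prv U φ) (h2 : Prv U ∼φ) : False := by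
  apply hcon
  rw [prv_iff] at *
  intro M
  exact absurd (h1 M) ((Sentence.realize_not _).1 (h2 M))

theorem refut_inf {φ ψ : L.Sentence} (h : Prv ({φ} : L.Theory) ∼ψ) :
    Prv (∅ : L.Theory) ∼(φ ⊓ ψ) := by
  rw [prv_iff] at *
  intro M
  refine (Sentence.realize_not _).2 fun hM => ?_
  obtain ⟨h1, h2⟩ := (Sentence.realize_inf _).1 hM
  have : M ⊨ ({φ} : L.Theory) := by simpa using h1
  exact (Sentence.realize_not _).1 (h (Theory.ModelType.of {φ} M)) h2

theorem mem_codes (g : Numbering L) {S : Set L.Sentence} {n : ℕ} :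
    n ∈ g.codes S ↔ g.equiv.symm n ∈ S := by
  constructor
  · rintro ⟨φ, h, rfl⟩
    simpa using h
  · exact fun h => ⟨_, h, by simp⟩

end Logic

/-- Suppose every `φ ∈ X` proves every axiom of `U`
(`U ⦚ X`). If `U` is `X`-creative and effectively `Y`-inseparable, then `U` is
strongly effectively `(X ∧ Y)`-inseparable, where
`X ∧ Y = {φ ⊓ ψ | φ ∈ X, ψ ∈ Y}` and the relevant pair is `(U_p, 0_{U,r})`. -/
theorem statement18 {L : FirstOrder.Language} (g : Numbering L) (U : L.Theory)
    (hU : g.CEThy U) (hcon : Consistent U)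
    (X Y : Set L.Sentence)
    (hdom : ∀ φ ∈ X, ∀ ψ ∈ U, Prv ({φ} : L.Theory) ψ)
    (hcr : XCreative g U X) (hins : EffXInseparable g U Y) :
    ∃ Φ : ℕ → ℕ →. ℕ, Partrec₂ Φ ∧ ∀ i j,
      WeaklyBiseparate (WSet i) (WSet j)
        (g.codes (Thms U)) (g.codes (Refut (∅ : L.Theory))) →
      ∃ n ∈ Φ i j, n ∈ g.codes (Cup X Y) ∧ n ∉ WSet i ∪ WSet j := by
  obtain ⟨u, hu⟩ := hU
  obtain ⟨t, ht⟩ : ∃ t, WSet t = g.codes (Thms U) := by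
    refine ⟨g.thmIdx u, ?_⟩
    rw [g.thmIdx_spec, ← hu]
    simp [Numbering.codes]
  obtain ⟨C, hC, hC2⟩ := hcr
  obtain ⟨I, hI, hI2⟩ := hins
  obtain ⟨kS, hkS, hkS2⟩ := proj_idx t _ g.inf_comp
  obtain ⟨kP, hkP, hkP2⟩ := preim_idx _ g.inf_comp
  obtain ⟨kU, hkU, hkU2⟩ := union_idx t
  refine ⟨fun i j => (C (kS j)).bind fun a => (I (kU (kP a i)) (kP a j)).map fun b =>
    g.equiv (g.equiv.symm a ⊓ g.equiv.symm b), ?_, ?_⟩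
  · have c1 : Partrec fun p : ℕ × ℕ => C (kS p.2) := hC.comp (hkS.comp Computable.snd)
    have c2 : Partrec fun x : (ℕ × ℕ) × ℕ => I (kU (kP x.2 x.1.1)) (kP x.2 x.1.2) :=
      hI.comp (hkU.comp (hkP.comp Computable.snd (Computable.fst.comp Computable.fst)))
        (hkP.comp Computable.snd (Computable.snd.comp Computable.fst))
    have c3 : Computable₂ fun (x : (ℕ × ℕ) × ℕ) (b : ℕ) =>
        g.equiv (g.equiv.symm x.2 ⊓ g.equiv.symm b) :=
      g.inf_comp.comp (Computable.snd.comp Computable.fst) Computable.snd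
    exact c1.bind (c2.map c3)
  · rintro i j ⟨h1, h2, h3, h4⟩
    rw [Set.eq_empty_iff_forall_notMem] at h3 h4
    obtain ⟨a, haC, haX, haN⟩ := hC2 (kS j) (by
      rw [Set.eq_empty_iff_forall_notMem]
      rintro n ⟨hn, hn'⟩
      rw [hkS2] at hn'
      obtain ⟨m, hm, hm'⟩ := hn'
      rw [ht] at hm
      exact h4 _ ⟨hm', ⟨_, prv_inf ((mem_codes g).1 hn) ((mem_codes g).1 hm), rfl⟩⟩)
    have haX' := (mem_codes g).1 haX
    have key : ∀ b ∈ g.codes (Refut U),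
        g.equiv (g.equiv.symm a ⊓ g.equiv.symm b) ∈ g.codes (Refut (∅ : L.Theory)) := by
      intro b hb
      exact ⟨_, refut_inf (prv_cut (hdom _ haX') ((mem_codes g).1 hb)), rfl⟩
    obtain ⟨b, hbI, hbY, hbN⟩ := hI2 (kU (kP a i)) (kP a j) (by
      rw [hkU2, hkP2, hkP2, ht]
      refine ⟨Set.subset_union_left, fun b hb => h2 (key b hb), ?_, ?_⟩
      · rw [Set.eq_empty_iff_forall_notMem]
        rintro b ⟨hb | hb, hb'⟩
        · exact prv_not_both hcon ((mem_codes g).1 hb) ((mem_codes g).1 hb')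
        · exact h3 _ ⟨hb, key b hb'⟩
      · rw [Set.eq_empty_iff_forall_notMem]
        rintro b ⟨hb, hb'⟩
        apply haN
        right
        rw [hkS2]
        exact ⟨b, ht ▸ hb', hb⟩)
    rw [hkU2, hkP2, hkP2] at hbN
    refine ⟨_, Part.mem_bind haC (Part.mem_map _ hbI),
      ⟨_, ⟨_, haX', _, (mem_codes g).1 hbY, rfl⟩, rfl⟩, ?_⟩
    rintro (h | h)
    · exact hbN (Or.inl (Or.inr h))
    · exact hbN (Or.inr h)

end PourEl
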